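/- Let μ be a probability measure on Ω, X : Ω → ℝ a bounded measurable function, and α ∈ (0,1). With q the lower α-quantile of X, ε the associated atom weight, and Z* := (1/α)(1_{X < q} + ε · 1_{X = q}), the density Z* maximizes the expected loss among all admissible densities: for every measurable Z : Ω → ℝ with 0 ≤ Z ≤ 1/α μ-a.e. and ∫ Z dμ = 1, one has ∫ (−X) · Z dμ ≤ ∫ (−X) · Z* dμ. Consequently the supremum sup { ∫ (−X) · Z dμ | Z measurable, 0 ≤ Z ≤ 1/α, ∫ Z dμ = 1 } is attained at Z*. -/

import Mathlib

open MeasureTheory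

/-!
For densities `Z` and `W` of equal mass, `∫ X * Z - ∫ X * W = ∫ (X - q) * (Z - W)` for every
constant `q`. If `q` is the `α`-quantile and `W` is as large as allowed (`1 / α`) on `{X < q}` and
zero on `{q < X}`, the integrand on the right is nonnegative for every `Z` with values in
`[0, 1 / α]`. Since `α` lies between `μ {X < q}` and `μ {X ≤ q}`, the atom `{X = q}` can be given a
weight in `[0, 1]` that makes the mass of `W` equal to one.
-/

section

open Filter Set Topology

theorem monotone_ofPred_le {ι β : Type*} [Preorder β] (f : ι → β) :
    Monotone fun b => {i | f i ≤ b} :=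
  fun _ _ hbc _ hi => le_trans hi hbc

variable {Ω : Type*} [MeasurableSpace Ω] {μ : Measure Ω} {X : Ω → ℝ} {α : ℝ}

theorem nonempty_ofPred_le_measureReal_le [IsFiniteMeasure μ] (hα : α < μ.real univ) :
    {s : ℝ | α ≤ μ.real {ω | X ω ≤ s}}.Nonempty := by
  have hunion : ⋃ s : ℝ, {ω | X ω ≤ s} = univ :=
    iUnion_eq_univ_iff.2 fun ω => ⟨X ω, le_refl (X ω)⟩
  have hlim := tendsto_measure_iUnion_atTop (μ := μ) (monotone_ofPred_le X)
  rw [hunion] at hlim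
  have hlim_real := (ENNReal.tendsto_toReal (measure_ne_top μ univ)).comp hlim
  obtain ⟨s, hs⟩ := (hlim_real.eventually_const_le hα).exists
  exact ⟨s, hs⟩

theorem bddBelow_ofPred_le_measureReal_le [IsFiniteMeasure μ] (hX : AEMeasurable X μ)
    (hα : 0 < α) : BddBelow {s : ℝ | α ≤ μ.real {ω | X ω ≤ s}} := by
  have hinter : ⋂ s : ℝ, {ω | X ω ≤ s} = ∅ :=
    iInter_eq_empty_iff.2 fun ω => ⟨X ω - 1, not_le.2 (sub_one_lt (X ω))⟩
  have hlim := tendsto_measure_iInter_atBot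
    (fun s : ℝ => nullMeasurableSet_le hX (aemeasurable_const (b := s))) (monotone_ofPred_le X)
    ⟨0, measure_ne_top μ _⟩
  rw [hinter, measure_empty] at hlim
  have hlim_real := (ENNReal.tendsto_toReal ENNReal.zero_ne_top).comp hlim
  obtain ⟨s, hs⟩ := (hlim_real.eventually_lt_const hα).exists
  refine ⟨s, fun t ht => ?_⟩
  by_contra! hts
  exact (ht.trans (measureReal_mono (monotone_ofPred_le X hts.le))).not_gt hs

/-- The lower `α`-quantile of `X` under `μ`. For a finite measure it is meaningful when
`0 < α < μ univ`; otherwise the infimum may be over an empty or unbounded set, and is then `0`. -/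
noncomputable def lowerQuantile (μ : Measure Ω) (X : Ω → ℝ) (α : ℝ) : ℝ :=
  sInf {s : ℝ | α ≤ μ.real {ω | X ω ≤ s}}

theorem le_measureReal_le_lowerQuantile [IsFiniteMeasure μ] (hX : AEMeasurable X μ)
    (hα : α < μ.real univ) : α ≤ μ.real {ω | X ω ≤ lowerQuantile μ X α} := by
  set q := lowerQuantile μ X α
  have hinter : ⋂ s > q, {ω | X ω ≤ s} = {ω | X ω ≤ q} := by
    ext ω
    simp only [mem_iInter, mem_ofPred_eq]
    exact forall_gt_imp_ge_iff_le_of_dense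
  have hlim := tendsto_measure_biInter_gt (μ := μ) (a := q)
    (fun s _ => nullMeasurableSet_le hX (aemeasurable_const (b := s)))
    (fun _ _ _ hst => monotone_ofPred_le X hst) ⟨q + 1, lt_add_one q, measure_ne_top μ _⟩
  rw [hinter] at hlim
  have hlim_real := (ENNReal.tendsto_toReal (measure_ne_top μ _)).comp hlim
  refine ge_of_tendsto hlim_real (eventually_mem_nhdsWithin.mono fun s hs => ?_)
  obtain ⟨t, ht, hts⟩ := exists_lt_of_csInf_lt (nonempty_ofPred_le_measureReal_le hα) hs
  exact le_trans ht (measureReal_mono (monotone_ofPred_le X hts.le))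

theorem measureReal_lt_lowerQuantile_le [IsFiniteMeasure μ] (hX : AEMeasurable X μ)
    (hα : 0 < α) : μ.real {ω | X ω < lowerQuantile μ X α} ≤ α := by
  obtain ⟨u, hu_mono, hu_lt, hu_lim⟩ := exists_seq_strictMono_tendsto (lowerQuantile μ X α)
  have hunion : ⋃ n, {ω | X ω ≤ u n} = {ω | X ω < lowerQuantile μ X α} := by
    ext ω
    simp only [mem_iUnion, mem_ofPred_eq]
    exact ⟨fun ⟨n, hn⟩ => hn.trans_lt (hu_lt n), fun h => (hu_lim.eventually_const_le h).exists⟩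
  have hlim := tendsto_measure_iUnion_atTop (μ := μ)
    ((monotone_ofPred_le X).comp hu_mono.monotone)
  simp only [Function.comp_apply, hunion] at hlim
  have hlim_real := (ENNReal.tendsto_toReal (measure_ne_top μ _)).comp hlim
  refine le_of_tendsto' hlim_real fun n => ?_
  have hn := notMem_of_lt_csInf (hu_lt n) (bddBelow_ofPred_le_measureReal_le hX hα)
  exact le_of_not_ge hn

theorem le_measureReal_lt_add_measureReal_eq_lowerQuantile [IsFiniteMeasure μ]
    (hX : AEMeasurable X μ) (hα : α < μ.real univ) :
    α ≤ μ.real {ω | X ω < lowerQuantile μ X α} + μ.real {ω | X ω = lowerQuantile μ X α} := by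
  refine (le_measureReal_le_lowerQuantile hX hα).trans ?_
  exact (measureReal_mono fun ω (hω : X ω ≤ _) => hω.lt_or_eq).trans (measureReal_union_le _ _)

/-- The proportion of the atom `{X = q}` at the lower `α`-quantile `q` which has to be added to
`{X < q}` to reach mass `α`; it is set to `0` when there is no atom. -/
noncomputable def quantileAtomWeight (μ : Measure Ω) (X : Ω → ℝ) (α : ℝ) : ℝ :=
  if μ.real {ω | X ω = lowerQuantile μ X α} = 0 then 0
  else (α - μ.real {ω | X ω < lowerQuantile μ X α}) / μ.real {ω | X ω = lowerQuantile μ X α}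

theorem quantileAtomWeight_mem_Icc [IsFiniteMeasure μ] (hX : AEMeasurable X μ)
    (hα : α ∈ Ioo 0 (μ.real univ)) : quantileAtomWeight μ X α ∈ Icc 0 1 := by
  have hlower := measureReal_lt_lowerQuantile_le hX hα.1
  have hupper := le_measureReal_lt_add_measureReal_eq_lowerQuantile hX hα.2
  unfold quantileAtomWeight
  split_ifs
  · exact left_mem_Icc.2 zero_le_one
  · exact ⟨div_nonneg (sub_nonneg.2 hlower) measureReal_nonneg,
      div_le_one_of_le₀ (sub_le_iff_le_add'.2 hupper) measureReal_nonneg⟩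

theorem measureReal_lt_add_quantileAtomWeight_mul [IsFiniteMeasure μ] (hX : AEMeasurable X μ)
    (hα : α ∈ Ioo 0 (μ.real univ)) :
    μ.real {ω | X ω < lowerQuantile μ X α}
      + quantileAtomWeight μ X α * μ.real {ω | X ω = lowerQuantile μ X α} = α := by
  have hlower := measureReal_lt_lowerQuantile_le hX hα.1
  have hupper := le_measureReal_lt_add_measureReal_eq_lowerQuantile hX hα.2
  unfold quantileAtomWeight
  split_ifs with hatom
  · linarith
  · rw [div_mul_cancel₀ _ hatom, add_sub_cancel]

/-- The extremal density `Z*` of the robust representation of the Average Value at Risk: `1 / α`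
times the indicator of the smallest values of `X`, with the atom at the quantile weighted so that
the mass before normalization is `α`. -/
noncomputable def avarDensity (μ : Measure Ω) (X : Ω → ℝ) (α : ℝ) (ω : Ω) : ℝ :=
  (1 / α) * ({ω | X ω < lowerQuantile μ X α}.indicator 1 ω
    + quantileAtomWeight μ X α * {ω | X ω = lowerQuantile μ X α}.indicator 1 ω)

theorem avarDensity_of_lt {ω : Ω} (h : X ω < lowerQuantile μ X α) :
    avarDensity μ X α ω = 1 / α := by
  simp [avarDensity, h, h.ne]

theorem avarDensity_of_eq {ω : Ω} (h : X ω = lowerQuantile μ X α) :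
    avarDensity μ X α ω = 1 / α * quantileAtomWeight μ X α := by
  simp [avarDensity, h]

theorem avarDensity_of_gt {ω : Ω} (h : lowerQuantile μ X α < X ω) :
    avarDensity μ X α ω = 0 := by
  simp [avarDensity, h.le, h.ne']

theorem avarDensity_mem_Icc [IsFiniteMeasure μ] (hX : AEMeasurable X μ)
    (hα : α ∈ Ioo 0 (μ.real univ)) (ω : Ω) : avarDensity μ X α ω ∈ Icc 0 (1 / α) := by
  have hinv : 0 ≤ 1 / α := one_div_nonneg.2 hα.1.le
  rcases lt_trichotomy (X ω) (lowerQuantile μ X α) with h | h | h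
  · rw [avarDensity_of_lt h]
    exact right_mem_Icc.2 hinv
  · obtain ⟨hweight_nonneg, hweight_le_one⟩ := quantileAtomWeight_mem_Icc hX hα
    rw [avarDensity_of_eq h]
    exact ⟨mul_nonneg hinv hweight_nonneg, mul_le_of_le_one_right hinv hweight_le_one⟩
  · rw [avarDensity_of_gt h]
    exact left_mem_Icc.2 hinv

theorem measurable_avarDensity (hX : Measurable X) : Measurable (avarDensity μ X α) :=
  ((measurable_one.indicator (measurableSet_lt hX measurable_const)).add
    ((measurable_one.indicator (measurableSet_eq_fun hX measurable_const)).const_mul _)).const_mul _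

theorem integral_avarDensity [IsFiniteMeasure μ] (hX : AEMeasurable X μ)
    (hα : α ∈ Ioo 0 (μ.real univ)) : ∫ ω, avarDensity μ X α ω ∂μ = 1 := by
  have hlt : NullMeasurableSet {ω | X ω < lowerQuantile μ X α} μ :=
    nullMeasurableSet_lt hX aemeasurable_const
  have heq : NullMeasurableSet {ω | X ω = lowerQuantile μ X α} μ :=
    nullMeasurableSet_eq_fun hX aemeasurable_const
  have hone : Integrable (1 : Ω → ℝ) μ := integrable_const 1
  unfold avarDensity
  rw [integral_const_mul, integral_add (hone.indicator₀ hlt) ((hone.indicator₀ heq).const_mul _),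
    integral_const_mul, integral_indicator₀ hlt, integral_indicator₀ heq]
  simp only [Pi.one_apply, setIntegral_one_eq_measureReal]
  rw [measureReal_lt_add_quantileAtomWeight_mul hX hα, one_div_mul_cancel hα.1.ne']

theorem integral_mul_le_integral_mul_of_single_crossing {W Z : Ω → ℝ} {q : ℝ}
    (hW : Integrable W μ) (hZ : Integrable Z μ)
    (hXW : Integrable (fun ω => X ω * W ω) μ) (hXZ : Integrable (fun ω => X ω * Z ω) μ)
    (hlt : ∀ᵐ ω ∂μ, X ω < q → Z ω ≤ W ω) (hgt : ∀ᵐ ω ∂μ, q < X ω → W ω ≤ Z ω)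
    (hmass : ∫ ω, W ω ∂μ = ∫ ω, Z ω ∂μ) :
    ∫ ω, X ω * W ω ∂μ ≤ ∫ ω, X ω * Z ω ∂μ := by
  have hcross : ∫ ω, (X ω * W ω - q * W ω) ∂μ ≤ ∫ ω, (X ω * Z ω - q * Z ω) ∂μ := by
    refine integral_mono_ae (hXW.sub (hW.const_mul q)) (hXZ.sub (hZ.const_mul q)) ?_
    filter_upwards [hlt, hgt] with ω hlt hgt
    rcases lt_trichotomy (X ω) q with h | h | h
    · linarith [mul_nonneg_of_nonpos_of_nonpos (sub_nonpos.2 h.le) (sub_nonpos.2 (hlt h))]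
    · simp only [h, sub_self, le_refl]
    · linarith [mul_nonneg (sub_nonneg.2 h.le) (sub_nonneg.2 (hgt h))]
  rwa [integral_sub hXW (hW.const_mul q), integral_sub hXZ (hZ.const_mul q), integral_const_mul,
    integral_const_mul, hmass, sub_le_sub_iff_right] at hcross

theorem integrable_mul_of_ae_mem_Icc {Z : Ω → ℝ} {a b : ℝ} (hX : Integrable X μ)
    (hZ : AEStronglyMeasurable Z μ) (hbound : ∀ᵐ ω ∂μ, Z ω ∈ Icc a b) :
    Integrable (fun ω => X ω * Z ω) μ :=
  hX.mul_bdd hZ (hbound.mono fun _ hω => abs_le_max_abs_abs hω.1 hω.2)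

theorem integral_neg_mul_le_integral_neg_mul_avarDensity [IsFiniteMeasure μ]
    (hX : Integrable X μ) (hα : α ∈ Ioo 0 (μ.real univ)) {Z : Ω → ℝ}
    (hbound : ∀ᵐ ω ∂μ, 0 ≤ Z ω ∧ Z ω ≤ 1 / α) (hmass : ∫ ω, Z ω ∂μ = 1) :
    ∫ ω, (-X ω) * Z ω ∂μ ≤ ∫ ω, (-X ω) * avarDensity μ X α ω ∂μ := by
  have hmass_avar := integral_avarDensity hX.aemeasurable hα
  have hZ : Integrable Z μ := .of_integral_ne_zero (hmass ▸ one_ne_zero)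
  have hW : Integrable (avarDensity μ X α) μ := .of_integral_ne_zero (hmass_avar ▸ one_ne_zero)
  have hXW := integrable_mul_of_ae_mem_Icc hX hW.aestronglyMeasurable
    (ae_of_all μ (avarDensity_mem_Icc hX.aemeasurable hα))
  have hXZ := integrable_mul_of_ae_mem_Icc hX hZ.aestronglyMeasurable hbound
  simp only [neg_mul, integral_neg, neg_le_neg_iff]
  refine integral_mul_le_integral_mul_of_single_crossing (q := lowerQuantile μ X α) hW hZ hXW hXZ
    ?_ ?_ (hmass_avar.trans hmass.symm)
  · exact hbound.mono fun ω hω h => avarDensity_of_lt h ▸ hω.2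
  · exact hbound.mono fun ω hω h => avarDensity_of_gt h ▸ hω.1

theorem avar_robust_maximizer_general [IsFiniteMeasure μ] (hXmeas : Measurable X)
    (hXint : Integrable X μ) (hα : α ∈ Ioo 0 (μ.real univ)) :
    (∀ Z : Ω → ℝ, (∀ᵐ ω ∂μ, 0 ≤ Z ω ∧ Z ω ≤ 1 / α) → ∫ ω, Z ω ∂μ = 1 →
        ∫ ω, (-X ω) * Z ω ∂μ ≤ ∫ ω, (-X ω) * avarDensity μ X α ω ∂μ) ∧
    IsGreatest {r : ℝ | ∃ Z : Ω → ℝ, Measurable Z ∧ (∀ ω, 0 ≤ Z ω ∧ Z ω ≤ 1 / α) ∧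
        ∫ ω, Z ω ∂μ = 1 ∧ r = ∫ ω, (-X ω) * Z ω ∂μ}
      (∫ ω, (-X ω) * avarDensity μ X α ω ∂μ) := by
  refine ⟨fun Z => integral_neg_mul_le_integral_neg_mul_avarDensity hXint hα, ?_, ?_⟩
  · exact ⟨avarDensity μ X α, measurable_avarDensity hXmeas,
      avarDensity_mem_Icc hXmeas.aemeasurable hα, integral_avarDensity hXmeas.aemeasurable hα, rfl⟩
  · rintro r ⟨Z, -, hbound, hmass, rfl⟩
    exact integral_neg_mul_le_integral_neg_mul_avarDensity hXint hα (ae_of_all μ hbound) hmass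

end

/-- Theorem A.7 (part 2): the extreme density `Z*` maximizes the expected loss
`∫ (−X)·Z dμ` over all densities `Z` with `0 ≤ Z ≤ 1/α` and `∫ Z dμ = 1`;
in particular the supremum in the robust representation of `AVaR_α` is attained at `Z*`. -/
theorem avar_robust_maximizer {Ω : Type*} [MeasurableSpace Ω]
    (μ : Measure Ω) [IsProbabilityMeasure μ]
    (X : Ω → ℝ) (hXmeas : Measurable X) (hXb : ∃ C, ∀ ω, |X ω| ≤ C)
    (α : ℝ) (hα : α ∈ Set.Ioo (0:ℝ) 1)
    (q : ℝ) (hq : q = sInf {s : ℝ | α ≤ (μ {ω | X ω ≤ s}).toReal})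
    (ε : ℝ)
    (hε : ε = if (μ {ω | X ω = q}).toReal = 0 then 0
              else (α - (μ {ω | X ω < q}).toReal) / (μ {ω | X ω = q}).toReal)
    (Zstar : Ω → ℝ)
    (hZstar : Zstar = fun ω => (1/α) * (({ω | X ω < q} : Set Ω).indicator 1 ω
                + ε * ({ω | X ω = q} : Set Ω).indicator 1 ω)) :
    (∀ Z : Ω → ℝ, Measurable Z → (∀ᵐ ω ∂μ, 0 ≤ Z ω ∧ Z ω ≤ 1/α) →
        ∫ ω, Z ω ∂μ = 1 →
        ∫ ω, (-X ω) * Z ω ∂μ ≤ ∫ ω, (-X ω) * Zstar ω ∂μ) ∧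
    IsGreatest {r : ℝ | ∃ Z : Ω → ℝ, Measurable Z ∧ (∀ ω, 0 ≤ Z ω ∧ Z ω ≤ 1/α) ∧
        ∫ ω, Z ω ∂μ = 1 ∧ r = ∫ ω, (-X ω) * Z ω ∂μ}
      (∫ ω, (-X ω) * Zstar ω ∂μ) := by
  obtain ⟨C, hC⟩ := hXb
  have hXint : Integrable X μ := .of_bound hXmeas.aestronglyMeasurable C (ae_of_all μ hC)
  subst hq hε hZstar
  have hmax := avar_robust_maximizer_general hXmeas hXint (probReal_univ (μ := μ) ▸ hα)
  exact ⟨fun Z _ => hmax.1 Z, hmax.2⟩
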